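/- Let D = (V, E; c; s, t) be a flow network in which every arc belongs to at least one s-t path. If the flow game Γ_D is convex, then its characteristic function decomposes as a positively weighted sum of unanimity games over s-t paths: for every coalition S ⊆ E, γ(S) = Σ_{P ∈ 𝒫 : P ⊆ S} c(P). -/

import Mathlib

open scoped Classical
open Finset

noncomputable section

/-- The arcs (consecutive vertex pairs) of a vertex list. -/
def arcsOf {V : Type*} [DecidableEq V] (vs : List V) : Finset (V × V) :=
  (vs.zip vs.tail).toFinset

/-- `vs` is the vertex list of a directed path from `a` to `b` using arcs of `E`,
with pairwise distinct vertices. -/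
def IsPathList {V : Type*} (E : Finset (V × V)) (a b : V) (vs : List V) : Prop :=
  vs.Nodup ∧ vs.head? = some a ∧ vs.getLast? = some b ∧
    vs.Chain' (fun x y => (x, y) ∈ E)

/-- `P` is (the arc set of) an `s`-`t` path in the network with arc set `E`. -/
def IsSTPath {V : Type*} [DecidableEq V] (E : Finset (V × V)) (s t : V)
    (P : Finset (V × V)) : Prop :=
  ∃ vs : List V, IsPathList E s t vs ∧ P = arcsOf vs

/-- The capacity of a path (arc set): the minimum capacity of its arcs. -/
def pathCap {V : Type*} (c : V × V → ℝ) (P : Finset (V × V)) : ℝ :=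
  sInf (c '' (P : Set (V × V)))

/-- `e` is a bottleneck arc of some `s`-`t` path, i.e. `e ∈ B`. -/
def IsBottleneck {V : Type*} [DecidableEq V] (E : Finset (V × V)) (c : V × V → ℝ)
    (s t : V) (e : V × V) : Prop :=
  ∃ P : Finset (V × V), IsSTPath E s t P ∧ e ∈ P ∧ c e = pathCap c P

/-- The finite set `𝒫` of all `s`-`t` paths (as arc sets). -/
def stPaths {V : Type*} [DecidableEq V] (E : Finset (V × V)) (s t : V) :
    Finset (Finset (V × V)) :=
  E.powerset.filter (fun P => IsSTPath E s t P)

/-- The value of a flow `f`: net flow out of the source `s`. -/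
def flowValue {V : Type*} [DecidableEq V] (E : Finset (V × V)) (s : V)
    (f : V × V → ℝ) : ℝ :=
  ∑ e ∈ E.filter (fun e => e.1 = s), f e - ∑ e ∈ E.filter (fun e => e.2 = s), f e

/-- `f` is a feasible flow on the coalition `S`. -/
def IsFeasibleFlow {V : Type*} [DecidableEq V] (E : Finset (V × V)) (c : V × V → ℝ)
    (s t : V) (S : Finset (V × V)) (f : V × V → ℝ) : Prop :=
  (∀ e ∈ E, 0 ≤ f e ∧ f e ≤ c e) ∧
  (∀ e, e ∉ S → f e = 0) ∧
  (∀ v, v ≠ s → v ≠ t →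
    ∑ e ∈ E.filter (fun e => e.2 = v), f e = ∑ e ∈ E.filter (fun e => e.1 = v), f e)

/-- `γ` is the characteristic function of the flow game on `D = (V,E;c;s,t)`:
for each coalition `S ⊆ E`, `γ S` is the maximum value of a feasible flow on `S`. -/
def IsFlowGame {V : Type*} [DecidableEq V] (E : Finset (V × V)) (c : V × V → ℝ)
    (s t : V) (γ : Finset (V × V) → ℝ) : Prop :=
  ∀ S : Finset (V × V), S ⊆ E →
    IsGreatest {x : ℝ | ∃ f, IsFeasibleFlow E c s t S f ∧ flowValue E s f = x} (γ S)

/-- The cooperative game `γ` with player set `E` is convex (supermodular). -/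
def GameConvex {V : Type*} [DecidableEq V] (E : Finset (V × V))
    (γ : Finset (V × V) → ℝ) : Prop :=
  ∀ e ∈ E, ∀ S T : Finset (V × V), S ⊆ T → T ⊆ E.erase e →
    γ (insert e S) - γ S ≤ γ (insert e T) - γ T

/-- The directed graph with arc set `E` contains a directed cycle. -/
def HasDirectedCycle {V : Type*} (E : Finset (V × V)) : Prop :=
  ∃ (v : V) (vs : List V), (v :: vs).Nodup ∧
    (v :: vs).Chain' (fun x y => (x, y) ∈ E) ∧
    ((v :: vs).getLast (List.cons_ne_nil v vs), v) ∈ E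

/-!
Stripping paths off a flow one at a time always gives `γ(S) ≤ ∑ c(P)`, summed over the paths
`P ⊆ S`. For the reverse inequality, let `e` be an arc of a path `P ⊆ S`. Since `P ∖ {e}` carries no
flow, convexity yields `γ(S) ≥ γ(S ∖ {e}) + c(P)`, so by induction on `S` it is enough that a
bottleneck arc `e` of `P` lies on no other path.

Convexity also gives `γ(P ∪ Q) ≥ c(P) + c(Q) > c(P)` for distinct paths `P` and `Q`, so a bottleneck
arc of `P` can never be the only arc of `P ∪ Q` crossing a cut. Hence a path spliced from an initial
segment of `P` and a final segment of `Q` equals `P` or `Q`, depending on which segment contains its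
bottleneck. If `P` and `Q` share an arc `(a, b)` and `P`, before reaching `a`, met `Q` at or after
`b`, then splicing there would produce a path avoiding `a`, which is neither `P` nor `Q`. So the
shared arc is the only one of `P ∪ Q` leaving the set of vertices that `P` or `Q` visits before `b`;
if it is a bottleneck of `P`, then `P = Q`.
-/

section PathLists

variable {V : Type*} {E : Finset (V × V)} {s t u v x y : V} {l l₁ l₂ m₁ m₂ : List V}

theorem exists_eq_append_cons_of_not_disjoint {l m : List V} (h : ¬ l.Disjoint m) :
    ∃ l₁ y l₂, l = l₁ ++ y :: l₂ ∧ y ∈ m ∧ l₁.Disjoint m := by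
  obtain ⟨y, hy⟩ : ∃ y, l.find? (fun x => decide (x ∈ m)) = some y := by
    rw [← Option.isSome_iff_exists, List.find?_isSome]
    simpa [List.Disjoint] using h
  obtain ⟨hym, l₁, l₂, hl, hl₁⟩ := List.find?_eq_some_iff_append.1 hy
  exact ⟨l₁, y, l₂, hl, by simpa using hym, fun x hx => by simpa using hl₁ x hx⟩

theorem isPathList_iff_isChain :
    IsPathList E s t l ↔ l.Nodup ∧ l.head? = some s ∧ l.getLast? = some t ∧
      l.IsChain fun x y => (x, y) ∈ E :=
  Iff.rfl

theorem IsPathList.mono {S T : Finset (V × V)} (h : IsPathList S s t l) (hST : S ⊆ T) :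
    IsPathList T s t l :=
  ⟨h.1, h.2.1, h.2.2.1, h.2.2.2.imp fun _ _ hxy => hST hxy⟩

theorem isPathList_singleton : IsPathList E s t [x] ↔ x = s ∧ x = t := by
  simp [isPathList_iff_isChain]

theorem isPathList_cons_cons :
    IsPathList E s t (x :: y :: l) ↔
      x = s ∧ x ∉ y :: l ∧ (x, y) ∈ E ∧ IsPathList E y t (y :: l) := by
  simp only [isPathList_iff_isChain, List.nodup_cons, List.head?_cons, List.getLast?_cons_cons,
    List.isChain_cons_cons, Option.some_inj, true_and]
  tauto

theorem IsPathList.disjoint_append (h : IsPathList E s t (l₁ ++ l₂)) : l₁.Disjoint l₂ :=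
  List.disjoint_of_nodup_append h.1

theorem IsPathList.source_mem (h : IsPathList E s t (l₁ ++ y :: l₂)) : s ∈ l₁ ++ [y] := by
  have hhead : (l₁ ++ [y]).head? = some s := by simpa using h.2.1
  exact List.mem_of_head? hhead

theorem IsPathList.target_mem (h : IsPathList E s t (l₁ ++ y :: l₂)) : t ∈ y :: l₂ := by
  have hlast := h.2.2.1
  rw [List.getLast?_append_of_ne_nil _ (List.cons_ne_nil y l₂)] at hlast
  exact List.mem_of_getLast? hlast

theorem IsPathList.splice (h₁ : IsPathList E s u (l₁ ++ y :: l₂))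
    (h₂ : IsPathList E v t (m₁ ++ y :: m₂)) (hd : l₁.Disjoint (y :: m₂)) :
    IsPathList E s t (l₁ ++ y :: m₂) := by
  obtain ⟨nodup₁, head₁, -, chain₁⟩ := isPathList_iff_isChain.1 h₁
  obtain ⟨nodup₂, -, last₂, chain₂⟩ := isPathList_iff_isChain.1 h₂
  refine isPathList_iff_isChain.2 ⟨?_, by simpa using head₁, ?_, ?_⟩
  · exact List.Nodup.append nodup₁.of_append_left nodup₂.of_append_right hd
  · rwa [List.getLast?_append_of_ne_nil _ (List.cons_ne_nil _ _)] at last₂ ⊢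
  · rw [List.isChain_append] at chain₁ chain₂ ⊢
    exact ⟨chain₁.1, chain₂.2.1, chain₁.2.2⟩

theorem IsPathList.exists_of_arc (h : IsPathList E s x l) (hxy : (x, y) ∈ E) :
    ∃ l', IsPathList E s y l' := by
  by_cases hy : y ∈ l
  · obtain ⟨l₁, l₂, rfl⟩ := List.append_of_mem hy
    have hd : l₁.Disjoint [y] := List.disjoint_of_subset_right (by simp) h.disjoint_append
    exact ⟨l₁ ++ [y], h.splice (m₁ := []) (isPathList_singleton.2 ⟨rfl, rfl⟩) hd⟩
  · obtain ⟨nodup, head, last, chain⟩ := h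
    refine ⟨l ++ [y], ?_, by simp [head], by simp, ?_⟩
    · exact nodup.append (List.nodup_singleton y) (by simpa using hy)
    · refine List.isChain_append.2 ⟨chain, List.isChain_singleton y, ?_⟩
      simp [last, hxy]

end PathLists

section Arcs

variable {V : Type*} [DecidableEq V] {E S T : Finset (V × V)} {s t x y : V} {l : List V}

theorem arcsOf_singleton (x : V) : arcsOf [x] = ∅ := by simp [arcsOf]

theorem arcsOf_cons_cons (x y : V) (l : List V) :
    arcsOf (x :: y :: l) = insert (x, y) (arcsOf (y :: l)) := by simp [arcsOf]

theorem arcsOf_append_cons (l : List V) (y : V) (m : List V) :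
    arcsOf (l ++ y :: m) = arcsOf (l ++ [y]) ∪ arcsOf (y :: m) := by
  induction l with
  | nil => simp [arcsOf_singleton]
  | cons a l ih =>
    cases l with
    | nil => simp [arcsOf]
    | cons b l =>
      simp only [List.cons_append, arcsOf_cons_cons] at ih ⊢
      rw [ih, Finset.insert_union]

theorem mem_and_mem_of_mem_arcsOf {e : V × V} (h : e ∈ arcsOf l) : e.1 ∈ l ∧ e.2 ∈ l := by
  obtain ⟨h₁, h₂⟩ := List.of_mem_zip (List.mem_toFinset.1 h)
  exact ⟨h₁, List.mem_of_mem_tail h₂⟩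

theorem mem_arcsOf_iff_exists_append : (x, y) ∈ arcsOf l ↔ ∃ p q, l = p ++ x :: y :: q := by
  constructor
  · intro h
    induction l with
    | nil => simp [arcsOf] at h
    | cons a l ih =>
      cases l with
      | nil => simp [arcsOf] at h
      | cons b l =>
        rw [arcsOf_cons_cons, Finset.mem_insert, Prod.mk_inj] at h
        obtain ⟨rfl, rfl⟩ | h := h
        · exact ⟨[], l, rfl⟩
        · obtain ⟨p, q, hl⟩ := ih h
          exact ⟨a :: p, q, by rw [hl, List.cons_append]⟩
  · rintro ⟨p, q, rfl⟩
    rw [arcsOf_append_cons, arcsOf_cons_cons]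
    exact Finset.mem_union_right _ (Finset.mem_insert_self _ _)

theorem isChain_iff_arcsOf_subset : l.IsChain (fun x y => (x, y) ∈ E) ↔ arcsOf l ⊆ E := by
  induction l with
  | nil => simp [arcsOf]
  | cons a l ih =>
    cases l with
    | nil => simp [arcsOf]
    | cons b l => rw [List.isChain_cons_cons, ih, arcsOf_cons_cons, Finset.insert_subset_iff]

theorem IsPathList.arcsOf_subset (h : IsPathList E s t l) : arcsOf l ⊆ E :=
  isChain_iff_arcsOf_subset.1 h.2.2.2

theorem IsPathList.of_arcsOf_subset (h : IsPathList S s t l) (hT : arcsOf l ⊆ T) :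
    IsPathList T s t l :=
  ⟨h.1, h.2.1, h.2.2.1, isChain_iff_arcsOf_subset.2 hT⟩

theorem IsPathList.arcsOf_nonempty (hst : s ≠ t) (h : IsPathList E s t l) :
    (arcsOf l).Nonempty := by
  match l with
  | [] => simp [IsPathList] at h
  | [x] =>
    obtain ⟨hxs, hxt⟩ := isPathList_singleton.1 h
    exact absurd (hxs.symm.trans hxt) hst
  | x :: y :: l => exact arcsOf_cons_cons x y l ▸ Finset.insert_nonempty _ _

theorem IsPathList.sum_arcsOf_sub {M : Type*} [AddCommGroup M] (h : IsPathList E s t l)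
    (φ : V → M) : ∑ e ∈ arcsOf l, (φ e.1 - φ e.2) = φ s - φ t := by
  induction l generalizing s with
  | nil => simp [IsPathList] at h
  | cons x l ih =>
    cases l with
    | nil =>
      obtain ⟨rfl, rfl⟩ := isPathList_singleton.1 h
      simp [arcsOf_singleton]
    | cons y l =>
      obtain ⟨rfl, hx, -, hl⟩ := isPathList_cons_cons.1 h
      have hxy : (x, y) ∉ arcsOf (y :: l) := fun he => hx (mem_and_mem_of_mem_arcsOf he).1
      rw [arcsOf_cons_cons, Finset.sum_insert hxy, ih hl, sub_add_sub_cancel]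

theorem mem_stPaths {P : Finset (V × V)} :
    P ∈ stPaths E s t ↔ ∃ l, IsPathList E s t l ∧ P = arcsOf l := by
  rw [stPaths, Finset.mem_filter, Finset.mem_powerset]
  refine and_iff_right_of_imp ?_
  rintro ⟨l, hl, rfl⟩
  exact hl.arcsOf_subset

end Arcs

section PathCapacity

variable {V : Type*} {c : V × V → ℝ} {P : Finset (V × V)} {e : V × V}

theorem pathCap_le (he : e ∈ P) : pathCap c P ≤ c e :=
  csInf_le (P.finite_toSet.image c).bddBelow ⟨e, he, rfl⟩

theorem exists_eq_pathCap (hP : P.Nonempty) : ∃ e ∈ P, c e = pathCap c P :=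
  (hP.to_set.image c).csInf_mem (P.finite_toSet.image c)

theorem pathCap_nonneg (hc : ∀ e ∈ P, 0 ≤ c e) : 0 ≤ pathCap c P :=
  Real.sInf_nonneg (Set.forall_mem_image.2 hc)

theorem pathCap_pos (hP : P.Nonempty) (hc : ∀ e ∈ P, 0 < c e) : 0 < pathCap c P := by
  obtain ⟨e, he, hcap⟩ := exists_eq_pathCap (c := c) hP
  exact hcap ▸ hc e he

end PathCapacity

section Cuts

variable {V : Type*} [DecidableEq V] {a b : V} {l r : List V} {X : Finset V}

/-- The arcs of `S` that cross the cut given by `X`, directed out of `X`. -/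
def cutArcs (S : Finset (V × V)) (X : Finset V) : Finset (V × V) :=
  S.filter fun e => e.1 ∈ X ∧ e.2 ∉ X

theorem mem_cutArcs {S : Finset (V × V)} {e : V × V} :
    e ∈ cutArcs S X ↔ e ∈ S ∧ e.1 ∈ X ∧ e.2 ∉ X :=
  Finset.mem_filter

theorem cutArcs_arcsOf_subset_singleton (hl : ∀ x ∈ l ++ [a], x ∈ X)
    (hr : ∀ x ∈ b :: r, x ∉ X) : cutArcs (arcsOf (l ++ a :: b :: r)) X ⊆ {(a, b)} := by
  intro e he
  obtain ⟨he, hfst, hsnd⟩ := mem_cutArcs.1 he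
  rw [arcsOf_append_cons, arcsOf_cons_cons, Finset.mem_union, Finset.mem_insert] at he
  obtain he | rfl | he := he
  · exact absurd (hl _ (mem_and_mem_of_mem_arcsOf he).2) hsnd
  · exact Finset.mem_singleton_self _
  · exact absurd hfst (hr _ (mem_and_mem_of_mem_arcsOf he).1)

end Cuts

section Flows

variable {V : Type*} [DecidableEq V] {E S T : Finset (V × V)} {c : V × V → ℝ} {s t v : V}
  {f : V × V → ℝ} {l : List V} {e : V × V}

theorem flowValue_eq_sum (E : Finset (V × V)) (v : V) (f : V × V → ℝ) :
    flowValue E v f =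
      ∑ e ∈ E, f e * ((if e.1 = v then 1 else 0) - (if e.2 = v then 1 else 0)) := by
  simp only [flowValue, Finset.sum_filter, ← Finset.sum_sub_distrib, mul_sub, mul_ite, mul_one,
    mul_zero]

theorem flowValue_sub (E : Finset (V × V)) (v : V) (f g : V × V → ℝ) :
    flowValue E v (f - g) = flowValue E v f - flowValue E v g := by
  simp only [flowValue_eq_sum, Pi.sub_apply, sub_mul, Finset.sum_sub_distrib]

theorem sum_flowValue (E : Finset (V × V)) (X : Finset V) (f : V × V → ℝ) :
    ∑ v ∈ X, flowValue E v f =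
      ∑ e ∈ E, f e * ((if e.1 ∈ X then 1 else 0) - (if e.2 ∈ X then 1 else 0)) := by
  simp only [flowValue_eq_sum]
  rw [Finset.sum_comm]
  simp only [← Finset.mul_sum, Finset.sum_sub_distrib, Finset.sum_ite_eq]

-- Conservation at `v` says that `flowValue E v f`, the net outflow at `v`, vanishes.
theorem isFeasibleFlow_iff :
    IsFeasibleFlow E c s t S f ↔ (∀ e ∈ E, 0 ≤ f e ∧ f e ≤ c e) ∧ (∀ e, e ∉ S → f e = 0) ∧
      ∀ v, v ≠ s → v ≠ t → flowValue E v f = 0 := by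
  refine and_congr_right' (and_congr_right' (forall₃_congr fun v _ _ => ?_))
  rw [flowValue, sub_eq_zero, eq_comm]

theorem isFeasibleFlow_zero (hc : ∀ e ∈ E, 0 ≤ c e) : IsFeasibleFlow E c s t S 0 :=
  ⟨fun e he => ⟨le_rfl, hc e he⟩, fun _ _ => rfl, fun _ _ _ => by simp⟩

theorem IsFeasibleFlow.mono (hf : IsFeasibleFlow E c s t S f) (hST : S ⊆ T) :
    IsFeasibleFlow E c s t T f :=
  ⟨hf.1, fun e he => hf.2.1 e fun h => he (hST h), hf.2.2⟩

theorem IsFeasibleFlow.capacity_nonneg (hf : IsFeasibleFlow E c s t S f) (he : e ∈ E) :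
    0 ≤ c e :=
  (hf.1 e he).1.trans (hf.1 e he).2

theorem IsFeasibleFlow.flowValue_le_cut (hS : S ⊆ E) (hf : IsFeasibleFlow E c s t S f)
    {X : Finset V} (hs : s ∈ X) (ht : t ∉ X) :
    flowValue E s f ≤ ∑ e ∈ cutArcs S X, c e := by
  obtain ⟨hbounds, hsupport, hconservation⟩ := isFeasibleFlow_iff.1 hf
  calc flowValue E s f
      = ∑ v ∈ X, flowValue E v f := by
        rw [Finset.sum_eq_single_of_mem s hs]
        exact fun v hv hvs => hconservation v hvs (ne_of_mem_of_not_mem hv ht)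
    _ = ∑ e ∈ E, f e * ((if e.1 ∈ X then 1 else 0) - (if e.2 ∈ X then 1 else 0)) :=
        sum_flowValue E X f
    _ ≤ ∑ e ∈ E, if e ∈ cutArcs S X then c e else 0 := by
        refine Finset.sum_le_sum fun e he => ?_
        have := hbounds e he
        have := hsupport e
        by_cases hfst : e.1 ∈ X <;> by_cases hsnd : e.2 ∈ X <;> by_cases heS : e ∈ S <;>
          simp_all [mem_cutArcs]
    _ = ∑ e ∈ cutArcs S X, c e := by
        rw [Finset.sum_ite_mem,
          Finset.inter_eq_right.2 fun e he => hS (mem_cutArcs.1 he).1]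

theorem IsFeasibleFlow.flowValue_nonpos_of_forall_not_isPathList (hS : S ⊆ E)
    (hf : IsFeasibleFlow E c s t S f) (hno : ∀ l, ¬ IsPathList S s t l) :
    flowValue E s f ≤ 0 := by
  set X : Finset V := {v ∈ insert s (S.image Prod.snd) | ∃ l, IsPathList S s v l} with hX
  have hs : s ∈ X := by simpa [hX] using ⟨[s], isPathList_singleton.2 ⟨rfl, rfl⟩⟩
  have ht : t ∉ X := fun ht => by
    obtain ⟨l, hl⟩ := (Finset.mem_filter.1 ht).2
    exact hno l hl
  have hcut : cutArcs S X = ∅ := by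
    refine Finset.eq_empty_of_forall_notMem fun e he => ?_
    obtain ⟨heS, hfst, hsnd⟩ := mem_cutArcs.1 he
    obtain ⟨l, hl⟩ := (Finset.mem_filter.1 hfst).2
    have hmem : e.2 ∈ S.image Prod.snd := Finset.mem_image_of_mem _ heS
    exact hsnd (Finset.mem_filter.2 ⟨Finset.mem_insert_of_mem hmem, hl.exists_of_arc heS⟩)
  simpa [hcut] using hf.flowValue_le_cut hS hs ht

/-- The flow that sends `m` units along every arc of `P`. -/
def pathFlow (P : Finset (V × V)) (m : ℝ) : V × V → ℝ :=
  fun e => if e ∈ P then m else 0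

theorem IsPathList.flowValue_pathFlow (hl : IsPathList E s t l) (m : ℝ) (v : V) :
    flowValue E v (pathFlow (arcsOf l) m) =
      m * ((if s = v then 1 else 0) - (if t = v then 1 else 0)) := by
  simp only [flowValue_eq_sum, pathFlow, ite_mul, zero_mul]
  rw [Finset.sum_ite_mem, Finset.inter_eq_right.2 hl.arcsOf_subset, ← Finset.mul_sum,
    hl.sum_arcsOf_sub fun w => if w = v then (1 : ℝ) else 0]

theorem IsPathList.flowValue_pathFlow_source (hst : s ≠ t) (hl : IsPathList E s t l) (m : ℝ) :
    flowValue E s (pathFlow (arcsOf l) m) = m := by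
  simp [hl.flowValue_pathFlow, hst.symm]

theorem IsPathList.flowValue_pathFlow_of_ne (hl : IsPathList E s t l) (m : ℝ) (hs : v ≠ s)
    (ht : v ≠ t) : flowValue E v (pathFlow (arcsOf l) m) = 0 := by
  simp [hl.flowValue_pathFlow, hs.symm, ht.symm]

theorem IsPathList.isFeasibleFlow_pathFlow (hl : IsPathList E s t l)
    (hc : ∀ e ∈ E, 0 ≤ c e) :
    IsFeasibleFlow E c s t (arcsOf l) (pathFlow (arcsOf l) (pathCap c (arcsOf l))) := by
  refine isFeasibleFlow_iff.2 ⟨fun e he => ?_, fun e he => if_neg he, fun v hvs hvt =>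
    hl.flowValue_pathFlow_of_ne _ hvs hvt⟩
  by_cases hel : e ∈ arcsOf l
  · simpa [pathFlow, hel] using
      ⟨pathCap_nonneg fun x hx => hc x (hl.arcsOf_subset hx), pathCap_le hel⟩
  · simpa [pathFlow, hel] using hc e he

theorem IsFeasibleFlow.sub_pathFlow (hS : S ⊆ E) (hf : IsFeasibleFlow E c s t S f)
    (hl : IsPathList S s t l) (he : e ∈ arcsOf l) (hmin : ∀ x ∈ arcsOf l, f e ≤ f x) :
    IsFeasibleFlow E c s t (S.erase e) (f - pathFlow (arcsOf l) (f e)) := by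
  obtain ⟨hbounds, hsupport, hconservation⟩ := isFeasibleFlow_iff.1 hf
  have hfe : 0 ≤ f e := (hbounds e (hS (hl.arcsOf_subset he))).1
  refine isFeasibleFlow_iff.2 ⟨fun x hx => ?_, fun x hx => ?_, fun v hvs hvt => ?_⟩
  · by_cases hxl : x ∈ arcsOf l
    · simp only [Pi.sub_apply, pathFlow, if_pos hxl]
      exact ⟨sub_nonneg.2 (hmin x hxl), (sub_le_self _ hfe).trans (hbounds x hx).2⟩
    · simpa [pathFlow, hxl] using hbounds x hx
  · obtain rfl | hxe := eq_or_ne x e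
    · simp [pathFlow, he]
    · have hxS : x ∉ S := fun h => hx (Finset.mem_erase.2 ⟨hxe, h⟩)
      have hxl : x ∉ arcsOf l := fun h => hxS (hl.arcsOf_subset h)
      simp [pathFlow, hxl, hsupport x hxS]
  · rw [flowValue_sub, hconservation v hvs hvt,
      (hl.mono hS).flowValue_pathFlow_of_ne _ hvs hvt, sub_zero]

end Flows

section PathGame

variable {V : Type*} [DecidableEq V] {E S : Finset (V × V)} {c : V × V → ℝ} {s t : V}
  {f : V × V → ℝ} {l : List V} {e : V × V}

/-- The game `∑ P, c(P) u_P`, where `P` runs over the `s`-`t` paths and `u_P` is the unanimity game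
on `P`: the worth of `S` is the total capacity of the paths contained in `S`. -/
def pathGame (E : Finset (V × V)) (c : V × V → ℝ) (s t : V) (S : Finset (V × V)) : ℝ :=
  ∑ P ∈ (stPaths E s t).filter (fun P => P ⊆ S), pathCap c P

theorem pathCap_nonneg_of_mem_stPaths (hc : ∀ e ∈ E, 0 ≤ c e) {P : Finset (V × V)}
    (hP : P ∈ stPaths E s t) : 0 ≤ pathCap c P := by
  obtain ⟨l, hl, rfl⟩ := mem_stPaths.1 hP
  exact pathCap_nonneg fun e he => hc e (hl.arcsOf_subset he)

theorem pathGame_nonneg (hc : ∀ e ∈ E, 0 ≤ c e) : 0 ≤ pathGame E c s t S :=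
  Finset.sum_nonneg fun _ hP => pathCap_nonneg_of_mem_stPaths hc (Finset.mem_filter.1 hP).1

theorem pathGame_eq_zero (hno : ∀ l, ¬ IsPathList S s t l) : pathGame E c s t S = 0 := by
  rw [pathGame, Finset.filter_false_of_mem, Finset.sum_empty]
  intro P hP hPS
  obtain ⟨l, hl, rfl⟩ := mem_stPaths.1 hP
  exact hno l (hl.of_arcsOf_subset hPS)

theorem pathGame_eq_erase_add (e : V × V) :
    pathGame E c s t S = pathGame E c s t (S.erase e) +
      ∑ P ∈ (stPaths E s t).filter (fun P => P ⊆ S ∧ e ∈ P), pathCap c P := by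
  rw [pathGame, ← Finset.sum_filter_not_add_sum_filter _ (fun P => e ∈ P), pathGame,
    Finset.filter_filter, Finset.filter_filter]
  simp only [Finset.subset_erase]

theorem IsPathList.pathGame_erase_add_pathCap_le (hl : IsPathList E s t l)
    (hc : ∀ e ∈ E, 0 ≤ c e) (hlS : arcsOf l ⊆ S) (he : e ∈ arcsOf l) :
    pathGame E c s t (S.erase e) + pathCap c (arcsOf l) ≤ pathGame E c s t S := by
  rw [pathGame_eq_erase_add (S := S) e]
  gcongr
  refine Finset.single_le_sum (f := pathCap c) (fun P hP => ?_) ?_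
  · exact pathCap_nonneg_of_mem_stPaths hc (Finset.mem_filter.1 hP).1
  · exact Finset.mem_filter.2 ⟨mem_stPaths.2 ⟨l, hl, rfl⟩, hlS, he⟩

theorem IsPathList.pathGame_eq_erase_add_pathCap (hl : IsPathList E s t l)
    (hlS : arcsOf l ⊆ S) (he : e ∈ arcsOf l)
    (hunique : ∀ k, IsPathList E s t k → e ∈ arcsOf k → arcsOf k = arcsOf l) :
    pathGame E c s t S = pathGame E c s t (S.erase e) + pathCap c (arcsOf l) := by
  have hpaths : (stPaths E s t).filter (fun P => P ⊆ S ∧ e ∈ P) = {arcsOf l} := by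
    refine Finset.eq_singleton_iff_unique_mem.2 ⟨?_, fun P hP => ?_⟩
    · exact Finset.mem_filter.2 ⟨mem_stPaths.2 ⟨l, hl, rfl⟩, hlS, he⟩
    · obtain ⟨hP, -, heP⟩ := Finset.mem_filter.1 hP
      obtain ⟨k, hk, rfl⟩ := mem_stPaths.1 hP
      exact hunique k hk heP
  rw [pathGame_eq_erase_add e, hpaths, Finset.sum_singleton]

theorem IsFeasibleFlow.flowValue_le_pathGame (hst : s ≠ t) (hS : S ⊆ E)
    (hf : IsFeasibleFlow E c s t S f) : flowValue E s f ≤ pathGame E c s t S := by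
  have hc : ∀ e ∈ E, 0 ≤ c e := fun e he => hf.capacity_nonneg he
  induction S using Finset.strongInduction generalizing f with
  | H S ih =>
    by_cases hpath : ∃ l, IsPathList S s t l
    · obtain ⟨l, hl⟩ := hpath
      have hlE := hl.mono hS
      obtain ⟨e, he, hmin⟩ := Finset.exists_min_image (arcsOf l) f (hl.arcsOf_nonempty hst)
      have heS : e ∈ S := hl.arcsOf_subset he
      have hfe : f e ≤ pathCap c (arcsOf l) := by
        obtain ⟨x, hx, hcap⟩ := exists_eq_pathCap (c := c) (hl.arcsOf_nonempty hst)
        exact hcap ▸ (hmin x hx).trans (hf.1 x (hlE.arcsOf_subset hx)).2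
      calc flowValue E s f
          = flowValue E s (f - pathFlow (arcsOf l) (f e)) + f e := by
            rw [flowValue_sub, hlE.flowValue_pathFlow_source hst, sub_add_cancel]
        _ ≤ pathGame E c s t (S.erase e) + pathCap c (arcsOf l) :=
            add_le_add (ih _ (Finset.erase_ssubset heS) ((Finset.erase_subset _ _).trans hS)
              (hf.sub_pathFlow hS hl he hmin)) hfe
        _ ≤ pathGame E c s t S := hlE.pathGame_erase_add_pathCap_le hc hl.arcsOf_subset he
    · exact (hf.flowValue_nonpos_of_forall_not_isPathList hS (not_exists.1 hpath)).trans
        (pathGame_nonneg hc)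

end PathGame

section FlowGames

variable {V : Type*} [DecidableEq V] {E S T : Finset (V × V)} {c : V × V → ℝ} {s t : V}
  {γ : Finset (V × V) → ℝ} {l : List V} {e : V × V}

namespace IsFlowGame

theorem exists_flow (hγ : IsFlowGame E c s t γ) (hS : S ⊆ E) :
    ∃ f, IsFeasibleFlow E c s t S f ∧ flowValue E s f = γ S :=
  (hγ S hS).1

theorem flowValue_le (hγ : IsFlowGame E c s t γ) (hS : S ⊆ E) {f : V × V → ℝ}
    (hf : IsFeasibleFlow E c s t S f) : flowValue E s f ≤ γ S :=
  (hγ S hS).2 ⟨f, hf, rfl⟩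

theorem capacity_nonneg (hγ : IsFlowGame E c s t γ) (he : e ∈ E) : 0 ≤ c e := by
  obtain ⟨f, hf, -⟩ := hγ.exists_flow (Finset.empty_subset E)
  exact hf.capacity_nonneg he

theorem nonneg (hγ : IsFlowGame E c s t γ) (hS : S ⊆ E) : 0 ≤ γ S := by
  simpa [flowValue] using
    hγ.flowValue_le hS (isFeasibleFlow_zero fun _ he => hγ.capacity_nonneg he)

theorem mono (hγ : IsFlowGame E c s t γ) (hT : T ⊆ E) (hST : S ⊆ T) : γ S ≤ γ T := by
  obtain ⟨f, hf, hval⟩ := hγ.exists_flow (hST.trans hT)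
  exact hval ▸ hγ.flowValue_le hT (hf.mono hST)

theorem le_cut (hγ : IsFlowGame E c s t γ) (hS : S ⊆ E) {X : Finset V} (hs : s ∈ X)
    (ht : t ∉ X) : γ S ≤ ∑ e ∈ cutArcs S X, c e := by
  obtain ⟨f, hf, hval⟩ := hγ.exists_flow hS
  exact hval ▸ hf.flowValue_le_cut hS hs ht

theorem le_pathGame (hγ : IsFlowGame E c s t γ) (hst : s ≠ t) (hS : S ⊆ E) :
    γ S ≤ pathGame E c s t S := by
  obtain ⟨f, hf, hval⟩ := hγ.exists_flow hS
  exact hval ▸ hf.flowValue_le_pathGame hst hS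

theorem pathCap_le_arcsOf (hγ : IsFlowGame E c s t γ) (hst : s ≠ t)
    (hl : IsPathList E s t l) : pathCap c (arcsOf l) ≤ γ (arcsOf l) := by
  rw [← hl.flowValue_pathFlow_source hst (pathCap c (arcsOf l))]
  exact hγ.flowValue_le hl.arcsOf_subset
    (hl.isFeasibleFlow_pathFlow fun _ he => hγ.capacity_nonneg he)

theorem arcsOf_erase_nonpos (hγ : IsFlowGame E c s t γ) (hl : IsPathList E s t l)
    (he : e ∈ arcsOf l) : γ ((arcsOf l).erase e) ≤ 0 := by
  obtain ⟨a, b⟩ := e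
  obtain ⟨p, q, rfl⟩ := mem_arcsOf_iff_exists_append.1 he
  have hl' : IsPathList E s t ((p ++ [a]) ++ b :: q) := by simpa using hl
  have hcut : cutArcs ((arcsOf (p ++ a :: b :: q)).erase (a, b)) (p ++ [a]).toFinset = ∅ := by
    refine Finset.eq_empty_of_forall_notMem fun x hx => ?_
    obtain ⟨hx, hcross⟩ := mem_cutArcs.1 hx
    obtain ⟨hne, hx⟩ := Finset.mem_erase.1 hx
    refine hne (Finset.mem_singleton.1 (cutArcs_arcsOf_subset_singleton
      (fun _ => List.mem_toFinset.2) (fun y hy hyX => ?_) (mem_cutArcs.2 ⟨hx, hcross⟩)))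
    exact hl'.disjoint_append (List.mem_toFinset.1 hyX) hy
  have hle := hγ.le_cut ((Finset.erase_subset (a, b) _).trans hl.arcsOf_subset)
    (List.mem_toFinset.2 hl.source_mem)
    (fun ht => hl'.disjoint_append (List.mem_toFinset.1 ht) hl'.target_mem)
  rwa [hcut, Finset.sum_empty] at hle

end IsFlowGame

end FlowGames

section ConvexFlowGames

variable {V : Type*} [DecidableEq V] {E S : Finset (V × V)} {c : V × V → ℝ} {s t : V}
  {γ : Finset (V × V) → ℝ} {k l l₁ l₂ m₁ m₂ p₁ p₂ q₁ q₂ : List V} {a b y : V} {e : V × V}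

namespace IsFlowGame

theorem erase_add_pathCap_le (hγ : IsFlowGame E c s t γ) (hconv : GameConvex E γ) (hst : s ≠ t)
    (hl : IsPathList E s t l) (he : e ∈ arcsOf l) (hlS : arcsOf l ⊆ S) (hS : S ⊆ E) :
    γ (S.erase e) + pathCap c (arcsOf l) ≤ γ S := by
  have hmarginal := hconv e (hl.arcsOf_subset he) ((arcsOf l).erase e) (S.erase e)
    (Finset.erase_subset_erase e hlS) (Finset.erase_subset_erase e hS)
  rw [Finset.insert_erase he, Finset.insert_erase (hlS he)] at hmarginal
  have herase := hγ.arcsOf_erase_nonpos hl he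
  have hpath := hγ.pathCap_le_arcsOf hst hl
  linarith

theorem pathCap_add_pathCap_le_union (hγ : IsFlowGame E c s t γ) (hconv : GameConvex E γ)
    (hst : s ≠ t) (hk : IsPathList E s t k) (hl : IsPathList E s t l)
    (hne : arcsOf k ≠ arcsOf l) :
    pathCap c (arcsOf k) + pathCap c (arcsOf l) ≤ γ (arcsOf k ∪ arcsOf l) := by
  obtain ⟨e, he⟩ := Finset.symmDiff_nonempty.2 hne
  wlog hel : e ∈ arcsOf l ∧ e ∉ arcsOf k generalizing k l
  · have hek : e ∈ arcsOf k ∧ e ∉ arcsOf l := (Finset.mem_symmDiff.1 he).resolve_right hel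
    rw [add_comm, Finset.union_comm]
    exact this hl hk hne.symm (symmDiff_comm (arcsOf k) _ ▸ he) hek
  have hU : arcsOf k ∪ arcsOf l ⊆ E := Finset.union_subset hk.arcsOf_subset hl.arcsOf_subset
  calc pathCap c (arcsOf k) + pathCap c (arcsOf l)
      ≤ γ (arcsOf k) + pathCap c (arcsOf l) := by
        gcongr
        exact hγ.pathCap_le_arcsOf hst hk
    _ ≤ γ ((arcsOf k ∪ arcsOf l).erase e) + pathCap c (arcsOf l) := by
        gcongr
        exact hγ.mono ((Finset.erase_subset _ _).trans hU)
          (Finset.subset_erase.2 ⟨Finset.subset_union_left, hel.2⟩)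
    _ ≤ γ (arcsOf k ∪ arcsOf l) :=
        hγ.erase_add_pathCap_le hconv hst hl hel.1 Finset.subset_union_right hU

theorem arcsOf_eq_of_cutArcs_union_subset (hγ : IsFlowGame E c s t γ) (hconv : GameConvex E γ)
    (hst : s ≠ t) (hc : ∀ e ∈ E, 0 < c e) (hk : IsPathList E s t k) (hl : IsPathList E s t l)
    (he : e ∈ arcsOf k) (hbottleneck : c e = pathCap c (arcsOf k)) {X : Finset V} (hs : s ∈ X)
    (ht : t ∉ X) (hX : cutArcs (arcsOf k ∪ arcsOf l) X ⊆ {e}) : arcsOf k = arcsOf l := by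
  by_contra hne
  have hU : arcsOf k ∪ arcsOf l ⊆ E := Finset.union_subset hk.arcsOf_subset hl.arcsOf_subset
  have hle : pathCap c (arcsOf k) + pathCap c (arcsOf l) ≤ pathCap c (arcsOf k) :=
    calc pathCap c (arcsOf k) + pathCap c (arcsOf l)
        ≤ γ (arcsOf k ∪ arcsOf l) := hγ.pathCap_add_pathCap_le_union hconv hst hk hl hne
      _ ≤ ∑ x ∈ cutArcs (arcsOf k ∪ arcsOf l) X, c x := hγ.le_cut hU hs ht
      _ ≤ ∑ x ∈ {e}, c x := by
          refine Finset.sum_le_sum_of_subset_of_nonneg hX fun x hx _ => ?_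
          exact hγ.capacity_nonneg (Finset.mem_singleton.1 hx ▸ hk.arcsOf_subset he)
      _ = pathCap c (arcsOf k) := by rw [Finset.sum_singleton, hbottleneck]
  have hpos := pathCap_pos (hl.arcsOf_nonempty hst) fun x hx => hc x (hl.arcsOf_subset hx)
  linarith

theorem arcsOf_eq_of_disjoint (hγ : IsFlowGame E c s t γ) (hconv : GameConvex E γ)
    (hst : s ≠ t) (hc : ∀ e ∈ E, 0 < c e) (hp : IsPathList E s t (p₁ ++ a :: b :: p₂))
    (hq : IsPathList E s t (q₁ ++ a :: b :: q₂)) (hpq : p₁.Disjoint (b :: q₂))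
    (hqp : q₁.Disjoint (b :: p₂))
    (hbottleneck : c (a, b) = pathCap c (arcsOf (p₁ ++ a :: b :: p₂))) :
    arcsOf (p₁ ++ a :: b :: p₂) = arcsOf (q₁ ++ a :: b :: q₂) := by
  have hp' : IsPathList E s t ((p₁ ++ [a]) ++ b :: p₂) := by simpa using hp
  have hq' : IsPathList E s t ((q₁ ++ [a]) ++ b :: q₂) := by simpa using hq
  obtain ⟨hpp, hap⟩ := List.disjoint_append_left.1 hp'.disjoint_append
  obtain ⟨hqq, haq⟩ := List.disjoint_append_left.1 hq'.disjoint_append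
  let X : Finset V := (p₁ ++ q₁ ++ [a]).toFinset
  have hp_mem : ∀ x ∈ p₁ ++ [a], x ∈ X := fun x hx =>
    List.mem_toFinset.2 (by simp only [List.mem_append] at hx ⊢; tauto)
  have hq_mem : ∀ x ∈ q₁ ++ [a], x ∈ X := fun x hx =>
    List.mem_toFinset.2 (by simp only [List.mem_append] at hx ⊢; tauto)
  have hp_notMem : ∀ x ∈ b :: p₂, x ∉ X := fun x hx hxX =>
    List.disjoint_append_left.2 ⟨List.disjoint_append_left.2 ⟨hpp, hqp⟩, hap⟩
      (List.mem_toFinset.1 hxX) hx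
  have hq_notMem : ∀ x ∈ b :: q₂, x ∉ X := fun x hx hxX =>
    List.disjoint_append_left.2 ⟨List.disjoint_append_left.2 ⟨hpq, hqq⟩, haq⟩
      (List.mem_toFinset.1 hxX) hx
  refine hγ.arcsOf_eq_of_cutArcs_union_subset hconv hst hc hp hq
    (mem_arcsOf_iff_exists_append.2 ⟨p₁, p₂, rfl⟩) hbottleneck (hp_mem s hp.source_mem)
    (hp_notMem t hp'.target_mem) ?_
  rw [cutArcs, Finset.filter_union]
  exact Finset.union_subset (cutArcs_arcsOf_subset_singleton hp_mem hp_notMem)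
    (cutArcs_arcsOf_subset_singleton hq_mem hq_notMem)

theorem arcsOf_splice_eq_or_eq (hγ : IsFlowGame E c s t γ) (hconv : GameConvex E γ)
    (hst : s ≠ t) (hc : ∀ e ∈ E, 0 < c e) (hl : IsPathList E s t (l₁ ++ y :: l₂))
    (hm : IsPathList E s t (m₁ ++ y :: m₂)) (hlm : IsPathList E s t (l₁ ++ y :: m₂)) :
    arcsOf (l₁ ++ y :: m₂) = arcsOf (l₁ ++ y :: l₂) ∨
      arcsOf (l₁ ++ y :: m₂) = arcsOf (m₁ ++ y :: m₂) := by
  obtain ⟨⟨a, b⟩, hab, hbottleneck⟩ := exists_eq_pathCap (c := c) (hlm.arcsOf_nonempty hst)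
  rw [arcsOf_append_cons, Finset.mem_union] at hab
  obtain hab | hab := hab
  · left
    obtain ⟨p, q, hpq⟩ := mem_arcsOf_iff_exists_append.1 hab
    have hsplit : ∀ r, l₁ ++ y :: r = p ++ a :: b :: (q ++ r) := fun r => by
      rw [List.append_cons, hpq]; simp
    rw [hsplit] at hl hlm hbottleneck ⊢
    rw [hsplit]
    exact hγ.arcsOf_eq_of_disjoint hconv hst hc hlm hl
      (List.disjoint_of_subset_right (List.subset_cons_self a _) hl.disjoint_append)
      (List.disjoint_of_subset_right (List.subset_cons_self a _) hlm.disjoint_append) hbottleneck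
  · right
    obtain ⟨p, q, hpq⟩ := mem_arcsOf_iff_exists_append.1 hab
    rw [hpq, ← List.append_assoc] at hm hlm hbottleneck ⊢
    rw [← List.append_assoc]
    exact hγ.arcsOf_eq_of_disjoint hconv hst hc hlm hm
      (List.disjoint_of_subset_right (List.subset_cons_self a _) hlm.disjoint_append)
      (List.disjoint_of_subset_right (List.subset_cons_self a _) hm.disjoint_append) hbottleneck

theorem disjoint_of_common_arc (hγ : IsFlowGame E c s t γ) (hconv : GameConvex E γ)
    (hst : s ≠ t) (hc : ∀ e ∈ E, 0 < c e) (hp : IsPathList E s t (p₁ ++ a :: b :: p₂))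
    (hq : IsPathList E s t (q₁ ++ a :: b :: q₂)) : p₁.Disjoint (b :: q₂) := by
  by_contra hmeet
  have hap : a ∉ p₁ := fun h => hp.disjoint_append h List.mem_cons_self
  have haq : a ∉ b :: q₂ := (List.nodup_cons.1 hq.1.of_append_right).1
  have hpab : (a, b) ∈ arcsOf (p₁ ++ a :: b :: p₂) :=
    mem_arcsOf_iff_exists_append.2 ⟨p₁, p₂, rfl⟩
  have hqab : (a, b) ∈ arcsOf (q₁ ++ a :: b :: q₂) :=
    mem_arcsOf_iff_exists_append.2 ⟨q₁, q₂, rfl⟩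
  obtain ⟨l₁, y, l₂, rfl, hyq, hfirst⟩ := exists_eq_append_cons_of_not_disjoint hmeet
  obtain ⟨m₁, m₂, hm⟩ := List.append_of_mem hyq
  have hsub : y :: m₂ ⊆ b :: q₂ := hm ▸ List.subset_append_right m₁ _
  rw [List.append_assoc, List.cons_append] at hp hpab
  rw [hm, ← List.cons_append, ← List.append_assoc] at hq hqab
  have ha : (a, b) ∉ arcsOf (l₁ ++ y :: m₂) := fun h => by
    obtain ha | ha := List.mem_append.1 (mem_and_mem_of_mem_arcsOf h).1
    · exact hap (List.mem_append_left _ ha)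
    · exact haq (hsub ha)
  obtain heq | heq := hγ.arcsOf_splice_eq_or_eq hconv hst hc hp hq
    (hp.splice hq (List.disjoint_of_subset_right hsub hfirst))
  · exact ha (heq ▸ hpab)
  · exact ha (heq ▸ hqab)

theorem arcsOf_eq_of_bottleneck_mem (hγ : IsFlowGame E c s t γ) (hconv : GameConvex E γ)
    (hst : s ≠ t) (hc : ∀ e ∈ E, 0 < c e) (hk : IsPathList E s t k) (hl : IsPathList E s t l)
    (hek : e ∈ arcsOf k) (hel : e ∈ arcsOf l) (hbottleneck : c e = pathCap c (arcsOf k)) :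
    arcsOf k = arcsOf l := by
  obtain ⟨a, b⟩ := e
  obtain ⟨p₁, p₂, rfl⟩ := mem_arcsOf_iff_exists_append.1 hek
  obtain ⟨q₁, q₂, rfl⟩ := mem_arcsOf_iff_exists_append.1 hel
  exact hγ.arcsOf_eq_of_disjoint hconv hst hc hk hl
    (hγ.disjoint_of_common_arc hconv hst hc hk hl)
    (hγ.disjoint_of_common_arc hconv hst hc hl hk) hbottleneck

theorem pathGame_le (hγ : IsFlowGame E c s t γ) (hconv : GameConvex E γ) (hst : s ≠ t)
    (hc : ∀ e ∈ E, 0 < c e) (hS : S ⊆ E) : pathGame E c s t S ≤ γ S := by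
  induction S using Finset.strongInduction with
  | H S ih =>
    by_cases hpath : ∃ l, IsPathList S s t l
    · obtain ⟨l, hl⟩ := hpath
      have hlE := hl.mono hS
      obtain ⟨e, he, hbottleneck⟩ := exists_eq_pathCap (c := c) (hl.arcsOf_nonempty hst)
      calc pathGame E c s t S
          = pathGame E c s t (S.erase e) + pathCap c (arcsOf l) :=
            hlE.pathGame_eq_erase_add_pathCap hl.arcsOf_subset he fun k hk hek =>
              (hγ.arcsOf_eq_of_bottleneck_mem hconv hst hc hlE hk he hek hbottleneck).symm
        _ ≤ γ (S.erase e) + pathCap c (arcsOf l) := by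
            gcongr
            exact ih _ (Finset.erase_ssubset (hl.arcsOf_subset he))
              ((Finset.erase_subset _ _).trans hS)
        _ ≤ γ S := hγ.erase_add_pathCap_le hconv hst hlE he hl.arcsOf_subset hS
    · rw [pathGame_eq_zero (not_exists.1 hpath)]
      exact hγ.nonneg hS

end IsFlowGame

end ConvexFlowGames

theorem gamma_decomposition_of_convexity_general
    {V : Type*} [DecidableEq V]
    (E : Finset (V × V)) (c : V × V → ℝ) (s t : V) (γ : Finset (V × V) → ℝ)
    (hst : s ≠ t) (hc : ∀ e ∈ E, 0 < c e)
    (hγ : IsFlowGame E c s t γ)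
    (hconv : GameConvex E γ) :
    ∀ S : Finset (V × V), S ⊆ E →
      γ S = ∑ P ∈ (stPaths E s t).filter (fun P => P ⊆ S), pathCap c P :=
  fun _ hS => le_antisymm (hγ.le_pathGame hst hS) (hγ.pathGame_le hconv hst hc hS)

/-- If every arc lies on some `s`-`t` path and the flow game is convex,
then the characteristic function decomposes as a positively weighted sum of unanimity
games over the `s`-`t` paths: `γ(S) = Σ_{P ∈ 𝒫 : P ⊆ S} c(P)` for every `S ⊆ E`. -/
theorem gamma_decomposition_of_convexity
    {V : Type*} [Fintype V] [DecidableEq V]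
    (E : Finset (V × V)) (c : V × V → ℝ) (s t : V) (γ : Finset (V × V) → ℝ)
    (hst : s ≠ t) (hc : ∀ e ∈ E, 0 < c e)
    (hγ : IsFlowGame E c s t γ)
    (hcover : ∀ e ∈ E, ∃ P : Finset (V × V), IsSTPath E s t P ∧ e ∈ P)
    (hconv : GameConvex E γ) :
    ∀ S : Finset (V × V), S ⊆ E →
      γ S = ∑ P ∈ (stPaths E s t).filter (fun P => P ⊆ S), pathCap c P := by
  exact gamma_decomposition_of_convexity_general E c s t γ hst hc hγ hconv
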